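/- Define, for ρ > 0, F(ρ) = ∫₀^∞ ξ · K₁(√(1 + ρ⁻¹) · ξ) · I₁(ξ) · log I₁(ξ) dξ. Then lim_{ρ → ∞} ( ρ⁻¹ · √(1 + ρ⁻¹) · F(ρ) − 2ρ + (1/2) · log ρ ) / log ρ = 0; that is, the term ρ⁻¹ √(1+ρ⁻¹) F(ρ) equals 2ρ − (1/2) log ρ + o(log ρ) as ρ → ∞. -/

import Mathlib

open Real MeasureTheory Set Filter

/-- Modified Bessel function of the first kind of order one,
`I₁(z) = ∑_{k=0}^∞ (z/2)^(2k+1) / (k! (k+1)!)`. -/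
noncomputable def besselI1 (z : ℝ) : ℝ :=
  ∑' k : ℕ, (z / 2) ^ (2 * k + 1) / ((Nat.factorial k : ℝ) * (Nat.factorial (k + 1) : ℝ))

/-- Modified Bessel function of the second kind of order one,
`K₁(z) = ∫₀^∞ exp (−z cosh t) cosh t dt`. -/
noncomputable def besselK1 (z : ℝ) : ℝ :=
  ∫ t in Ioi (0 : ℝ), Real.exp (-z * Real.cosh t) * Real.cosh t

/-- Digamma function `ψ(x) = d/dx log Γ(x)`. -/
noncomputable def digamma (x : ℝ) : ℝ :=
  deriv (fun y : ℝ => Real.log (Real.Gamma y)) x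

/-- Conditional output density of the noncentral chi channel with four degrees of freedom. -/
noncomputable def condDensity (σN x y : ℝ) : ℝ :=
  (2 / σN ^ 2) * (y ^ 2 / x) * Real.exp (-(x ^ 2 + y ^ 2) / σN ^ 2) *
    besselI1 (2 * x * y / σN ^ 2)

/-- Rayleigh input density with mean-square `σS²`. -/
noncomputable def rayleighDensity (σS x : ℝ) : ℝ :=
  (2 * x / σS ^ 2) * Real.exp (-x ^ 2 / σS ^ 2)

/-- `F(ρ) = ∫₀^∞ ξ K₁(√(1+ρ⁻¹) ξ) I₁(ξ) log I₁(ξ) dξ`. -/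
noncomputable def Fint (ρ : ℝ) : ℝ :=
  ∫ ξ in Ioi (0 : ℝ),
    ξ * besselK1 (Real.sqrt (1 + ρ⁻¹) * ξ) * besselI1 ξ * Real.log (besselI1 ξ)

/-- Closed-form mutual information of Theorem 1. -/
noncomputable def Ixy (ρ : ℝ) : ℝ :=
  Real.log (ρ * Real.sqrt (1 + ρ⁻¹)) + ρ⁻¹ * Real.log (Real.sqrt (1 + ρ)) - ρ +
    ρ⁻¹ * Real.sqrt (1 + ρ⁻¹) * Fint ρ + digamma ρ⁻¹ - digamma 1 - 1

theorem integral_sq_mul_exp_neg_mul_sq_Ioi {b : ℝ} (hb : 0 < b) :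
    ∫ s in Ioi (0 : ℝ), s ^ 2 * exp (-b * s ^ 2) = √(π / b) / (4 * b) := by
  have h := integral_rpow_mul_exp_neg_mul_rpow (p := 2) (q := 2) two_pos (by norm_num) hb
  simp only [rpow_two] at h
  rw [h, show ((2 : ℝ) + 1) / 2 = 1 / 2 + 1 by norm_num, Gamma_add_one (by norm_num),
    Gamma_one_half_eq, show -((2 : ℝ) + 1) / 2 = -(1 / 2) - 1 by norm_num,
    rpow_sub_one hb.ne', rpow_neg hb.le, ← sqrt_eq_rpow, sqrt_div pi_pos.le]
  field_simp
  norm_num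

theorem integral_pow_four_mul_exp_neg_mul_sq_Ioi {b : ℝ} (hb : 0 < b) :
    ∫ s in Ioi (0 : ℝ), s ^ 4 * exp (-b * s ^ 2) = 3 * √(π / b) / (8 * b ^ 2) := by
  have h := integral_rpow_mul_exp_neg_mul_rpow (p := 2) (q := (4 : ℕ)) two_pos (by norm_num) hb
  simp only [rpow_two, rpow_natCast] at h
  rw [h, show (((4 : ℕ) : ℝ) + 1) / 2 = 1 / 2 + 1 + 1 by norm_num, Gamma_add_one (by norm_num),
    Gamma_add_one (by norm_num),
    Gamma_one_half_eq, show -(((4 : ℕ) : ℝ) + 1) / 2 = -(1 / 2) - 1 - 1 by norm_num,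
    rpow_sub_one hb.ne', rpow_sub_one hb.ne', rpow_neg hb.le, ← sqrt_eq_rpow, sqrt_div pi_pos.le]
  field_simp
  norm_num

theorem integrableOn_pow_mul_exp_neg_mul_sq_Ioi {b : ℝ} (hb : 0 < b) (n : ℕ) :
    IntegrableOn (fun s : ℝ => s ^ n * exp (-b * s ^ 2)) (Ioi 0) := by
  have h := integrableOn_rpow_mul_exp_neg_mul_sq hb (s := n)
    (by linarith [Nat.cast_nonneg (α := ℝ) n])
  simpa only [rpow_natCast] using h

theorem hasDerivAt_sinh_half (t : ℝ) :
    HasDerivAt (fun t : ℝ => sinh (t / 2)) (cosh (t / 2) / 2) t := by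
  simpa [div_eq_mul_inv] using ((hasDerivAt_id t).div_const 2).sinh

theorem image_sinh_half_Ioi : (fun t : ℝ => sinh (t / 2)) '' Ioi 0 = Ioi 0 := by
  ext y
  constructor
  · rintro ⟨t, ht, rfl⟩
    exact sinh_pos_iff.2 (half_pos ht)
  · intro hy
    exact ⟨2 * arsinh y, mem_Ioi.2 (mul_pos two_pos (arsinh_pos_iff.2 hy)), by simp⟩

theorem injOn_sinh_half : InjOn (fun t : ℝ => sinh (t / 2)) (Ioi 0) := by
  intro s _ t _ h
  have := sinh_injective h
  linarith

theorem integral_comp_sinh_half (g : ℝ → ℝ) :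
    ∫ t in Ioi (0 : ℝ), cosh (t / 2) / 2 * g (sinh (t / 2)) = ∫ s in Ioi (0 : ℝ), g s := by
  have h := integral_image_eq_integral_abs_deriv_smul measurableSet_Ioi
    (fun t _ => (hasDerivAt_sinh_half t).hasDerivWithinAt) injOn_sinh_half g
  rw [image_sinh_half_Ioi] at h
  rw [h]
  refine integral_congr_ae (ae_of_all _ fun t => ?_)
  simp only [smul_eq_mul]
  rw [abs_of_pos (by positivity)]

theorem integrableOn_comp_sinh_half {g : ℝ → ℝ} (hg : IntegrableOn g (Ioi 0)) :
    IntegrableOn (fun t => cosh (t / 2) / 2 * g (sinh (t / 2))) (Ioi 0) := by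
  have h := (integrableOn_image_iff_integrableOn_abs_deriv_smul measurableSet_Ioi
    (fun t _ => (hasDerivAt_sinh_half t).hasDerivWithinAt) injOn_sinh_half g).1
    (by rwa [image_sinh_half_Ioi])
  refine h.congr (ae_of_all _ fun t => ?_)
  simp only [smul_eq_mul]
  rw [abs_of_pos (by positivity)]

theorem cosh_eq_one_add_two_mul_sinh_half_sq (t : ℝ) : cosh t = 1 + 2 * sinh (t / 2) ^ 2 := by
  have h := cosh_two_mul (t / 2)
  rw [mul_div_cancel₀ t two_ne_zero, cosh_sq] at h
  linarith

theorem exp_neg_mul_cosh (x t : ℝ) :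
    exp (-x * cosh t) = exp (-x) * exp (-(2 * x) * sinh (t / 2) ^ 2) := by
  rw [cosh_eq_one_add_two_mul_sinh_half_sq, ← exp_add]
  ring_nf

theorem integrableOn_besselK1_upper {x : ℝ} (hx : 0 < x) :
    IntegrableOn (fun s : ℝ => 2 * (exp (-(2 * x) * s ^ 2) + 2 * (s ^ 2 * exp (-(2 * x) * s ^ 2))))
      (Ioi 0) := by
  have h0 := integrableOn_pow_mul_exp_neg_mul_sq_Ioi (by positivity : 0 < 2 * x) 0
  have h2 := integrableOn_pow_mul_exp_neg_mul_sq_Ioi (by positivity : 0 < 2 * x) 2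
  simp only [pow_zero, one_mul] at h0
  exact (h0.add (h2.const_mul 2)).const_mul 2

theorem besselK1_integrand_le {x : ℝ} (t : ℝ) :
    exp (-x * cosh t) * cosh t ≤ exp (-x) * (cosh (t / 2) / 2 *
      (2 * (exp (-(2 * x) * sinh (t / 2) ^ 2) +
        2 * (sinh (t / 2) ^ 2 * exp (-(2 * x) * sinh (t / 2) ^ 2))))) := by
  rw [exp_neg_mul_cosh, cosh_eq_one_add_two_mul_sinh_half_sq]
  have h1 := one_le_cosh (t / 2)
  have h2 : 0 ≤ (exp (-x) * exp (-(2 * x) * sinh (t / 2) ^ 2) * (1 + 2 * sinh (t / 2) ^ 2)) *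
    (cosh (t / 2) - 1) := mul_nonneg (by positivity) (by linarith)
  linarith

theorem integrableOn_besselK1 {x : ℝ} (hx : 0 < x) :
    IntegrableOn (fun t : ℝ => exp (-x * cosh t) * cosh t) (Ioi 0) := by
  refine Integrable.mono' ((integrableOn_comp_sinh_half
    (integrableOn_besselK1_upper hx)).const_mul (exp (-x))) ?_ (ae_of_all _ fun t => ?_)
  · exact (by fun_prop : Continuous fun t : ℝ => exp (-x * cosh t) * cosh t).aestronglyMeasurable
  · rw [norm_of_nonneg (by positivity)]
    exact besselK1_integrand_le t

theorem besselK1_le {x : ℝ} (hx : 0 < x) :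
    besselK1 x ≤ √(π / (2 * x)) * exp (-x) * (1 + 1 / (2 * x)) := by
  have h0 := integrableOn_pow_mul_exp_neg_mul_sq_Ioi (by positivity : 0 < 2 * x) 0
  have h2 := integrableOn_pow_mul_exp_neg_mul_sq_Ioi (by positivity : 0 < 2 * x) 2
  simp only [pow_zero, one_mul] at h0
  calc besselK1 x ≤ _ := setIntegral_mono (integrableOn_besselK1 hx) ((integrableOn_comp_sinh_half
        (integrableOn_besselK1_upper hx)).const_mul (exp (-x))) besselK1_integrand_le
    _ = _ := by
      rw [integral_const_mul, integral_comp_sinh_half (fun s : ℝ =>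
          2 * (exp (-(2 * x) * s ^ 2) + 2 * (s ^ 2 * exp (-(2 * x) * s ^ 2)))),
        integral_const_mul, integral_add h0 (h2.const_mul 2), integral_const_mul,
        integral_gaussian_Ioi, integral_sq_mul_exp_neg_mul_sq_Ioi (by positivity)]
      field_simp
      ring

theorem le_besselK1 {x : ℝ} (hx : 0 < x) : √(π / (2 * x)) * exp (-x) ≤ besselK1 x := by
  have h0 := integrableOn_pow_mul_exp_neg_mul_sq_Ioi (by positivity : 0 < 2 * x) 0
  simp only [pow_zero, one_mul] at h0
  calc √(π / (2 * x)) * exp (-x)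
      = ∫ t in Ioi (0 : ℝ), 2 * exp (-x) * (cosh (t / 2) / 2 *
          exp (-(2 * x) * sinh (t / 2) ^ 2)) := by
        rw [integral_const_mul, integral_comp_sinh_half (fun s : ℝ => exp (-(2 * x) * s ^ 2)),
          integral_gaussian_Ioi]
        ring
    _ ≤ besselK1 x := by
        refine setIntegral_mono ((integrableOn_comp_sinh_half h0).const_mul _)
          (integrableOn_besselK1 hx) fun t => ?_
        have h : cosh (t / 2) ≤ cosh t := by
          rw [cosh_le_cosh, abs_div, abs_two]
          linarith [abs_nonneg t]
        simp only [exp_neg_mul_cosh]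
        have := mul_le_mul_of_nonneg_left h
          (by positivity : 0 ≤ exp (-x) * exp (-(2 * x) * sinh (t / 2) ^ 2))
        linarith

theorem measurable_besselK1 : Measurable besselK1 := by
  have h : StronglyMeasurable (Function.uncurry fun x t : ℝ => exp (-x * cosh t) * cosh t) :=
    Continuous.stronglyMeasurable (by fun_prop)
  exact h.integral_prod_right.measurable

theorem integral_cos_pow_even_zero_pi (k : ℕ) :
    ∫ θ in (0 : ℝ)..π, cos θ ^ (2 * k) =
      π * (Nat.factorial (2 * k)) / (4 ^ k * (Nat.factorial k : ℝ) ^ 2) := by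
  induction k with
  | zero => simp
  | succ k ih =>
    rw [show 2 * (k + 1) = 2 * k + 2 by ring, integral_cos_pow, ih]
    simp only [sin_pi, sin_zero, Nat.factorial_succ]
    push_cast
    field_simp
    ring

theorem integral_cos_pow_even_mul_sin_sq_zero_pi (k : ℕ) :
    ∫ θ in (0 : ℝ)..π, cos θ ^ (2 * k) * sin θ ^ 2 =
      π * (Nat.factorial (2 * k)) /
        (2 ^ (2 * k + 1) * (Nat.factorial k : ℝ) * (Nat.factorial (k + 1) : ℝ)) := by
  have h : ∀ θ : ℝ, cos θ ^ (2 * k) * sin θ ^ 2 = cos θ ^ (2 * k) - cos θ ^ (2 * (k + 1)) := by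
    intro θ
    rw [sin_sq]
    ring
  simp only [h]
  rw [intervalIntegral.integral_sub (Continuous.intervalIntegrable (by fun_prop) _ _)
    (Continuous.intervalIntegrable (by fun_prop) _ _), integral_cos_pow_even_zero_pi,
    integral_cos_pow_even_zero_pi, show 2 * (k + 1) = 2 * k + 1 + 1 by ring]
  simp only [Nat.factorial_succ, pow_succ, pow_mul]
  push_cast
  field_simp
  norm_num
  ring

theorem hasSum_besselI1 (x : ℝ) :
    HasSum (fun k : ℕ => (x / 2) ^ (2 * k + 1) /
      ((Nat.factorial k : ℝ) * (Nat.factorial (k + 1) : ℝ)))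
      (x / π * ∫ θ in (0 : ℝ)..π, cosh (x * cos θ) * sin θ ^ 2) := by
  have h : HasSum (fun k : ℕ => ∫ θ in (0 : ℝ)..π,
      (x * cos θ) ^ (2 * k) / (Nat.factorial (2 * k)) * sin θ ^ 2)
      (∫ θ in (0 : ℝ)..π, cosh (x * cos θ) * sin θ ^ 2) := by
    refine intervalIntegral.hasSum_integral_of_dominated_convergence
      (fun k _ => x ^ (2 * k) / (Nat.factorial (2 * k))) (fun k => ?_) (fun k => ?_) ?_ ?_ ?_
    · exact Continuous.aestronglyMeasurable (by fun_prop)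
    · refine ae_of_all _ fun θ _ => ?_
      have h1 : cos θ ^ (2 * k) ≤ 1 := by
        rw [pow_mul]
        exact pow_le_one₀ (sq_nonneg _) (cos_sq_le_one θ)
      have h2 : sin θ ^ 2 ≤ 1 := sin_sq_le_one θ
      have h3 : 0 ≤ x ^ (2 * k) := by rw [pow_mul]; positivity
      have h4 : 0 ≤ cos θ ^ (2 * k) := by rw [pow_mul]; positivity
      rw [mul_pow, norm_of_nonneg (by positivity)]
      calc x ^ (2 * k) * cos θ ^ (2 * k) / (Nat.factorial (2 * k)) * sin θ ^ 2
          ≤ x ^ (2 * k) * 1 / (Nat.factorial (2 * k)) * 1 := by gcongr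
        _ = _ := by ring
    · exact ae_of_all _ fun θ _ => (hasSum_cosh x).summable
    · exact intervalIntegrable_const
    · exact ae_of_all _ fun θ _ => (hasSum_cosh (x * cos θ)).mul_right _
  refine (h.mul_left (x / π)).congr_fun ?_
  intro k
  have h5 : ∀ θ : ℝ, (x * cos θ) ^ (2 * k) / (Nat.factorial (2 * k)) * sin θ ^ 2 =
      x ^ (2 * k) / (Nat.factorial (2 * k)) * (cos θ ^ (2 * k) * sin θ ^ 2) := by
    intro θ
    ring
  simp only [h5]
  rw [intervalIntegral.integral_const_mul, integral_cos_pow_even_mul_sin_sq_zero_pi, div_pow,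
    pow_succ x]
  have := pi_pos
  field_simp

theorem besselI1_eq_integral (x : ℝ) :
    besselI1 x = x / π * ∫ θ in (0 : ℝ)..π, exp (x * cos θ) * sin θ ^ 2 := by
  have hsymm : ∫ θ in (0 : ℝ)..π, exp (-(x * cos θ)) * sin θ ^ 2 =
      ∫ θ in (0 : ℝ)..π, exp (x * cos θ) * sin θ ^ 2 := by
    have h := intervalIntegral.integral_comp_sub_left (a := 0) (b := π)
      (fun θ => exp (x * cos θ) * sin θ ^ 2) π
    simpa [cos_pi_sub, sin_pi_sub] using h
  have hcosh : ∀ θ : ℝ, cosh (x * cos θ) * sin θ ^ 2 =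
      1 / 2 * (exp (x * cos θ) * sin θ ^ 2) + 1 / 2 * (exp (-(x * cos θ)) * sin θ ^ 2) := by
    intro θ
    rw [cosh_eq]
    ring
  rw [besselI1, (hasSum_besselI1 x).tsum_eq]
  simp only [hcosh]
  rw [intervalIntegral.integral_add (Continuous.intervalIntegrable (by fun_prop) _ _)
    (Continuous.intervalIntegrable (by fun_prop) _ _), intervalIntegral.integral_const_mul,
    intervalIntegral.integral_const_mul, hsymm]
  ring

theorem half_le_besselI1 {x : ℝ} (hx : 0 ≤ x) : x / 2 ≤ besselI1 x := by
  have h := (hasSum_besselI1 x).summable.le_tsum 0 (fun k _ => by positivity)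
  simpa [besselI1] using h

theorem besselI1_le_mul_exp {x : ℝ} (hx : 0 ≤ x) : besselI1 x ≤ x * exp x := by
  have hpi := pi_pos
  rw [besselI1_eq_integral]
  have h : ∫ θ in (0 : ℝ)..π, exp (x * cos θ) * sin θ ^ 2 ≤ ∫ θ in (0 : ℝ)..π, exp x := by
    refine intervalIntegral.integral_mono_on hpi.le
      (Continuous.intervalIntegrable (by fun_prop) _ _) intervalIntegrable_const fun θ _ => ?_
    have h1 : exp (x * cos θ) ≤ exp x :=
      exp_le_exp.2 (mul_le_of_le_one_right hx (cos_le_one θ))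
    calc exp (x * cos θ) * sin θ ^ 2 ≤ exp x * 1 := by
          gcongr
          exact sin_sq_le_one θ
      _ = exp x := mul_one _
  calc x / π * ∫ θ in (0 : ℝ)..π, exp (x * cos θ) * sin θ ^ 2
      ≤ x / π * ∫ θ in (0 : ℝ)..π, exp x := by gcongr
    _ = x * exp x := by
      simp
      field_simp

theorem measurable_besselI1 : Measurable besselI1 := by
  have h : StronglyMeasurable (Function.uncurry fun x θ : ℝ => exp (x * cos θ) * sin θ ^ 2) :=
    Continuous.stronglyMeasurable (by fun_prop)
  have h1 : besselI1 = fun x => x / π * ∫ θ in Ioc 0 π, exp (x * cos θ) * sin θ ^ 2 := by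
    ext x
    rw [besselI1_eq_integral, intervalIntegral.integral_of_le pi_pos.le]
  rw [h1]
  exact (measurable_id.div_const π).mul h.integral_prod_right.measurable

theorem hasDerivAt_sin_half (θ : ℝ) :
    HasDerivAt (fun θ : ℝ => sin (θ / 2)) (cos (θ / 2) / 2) θ := by
  simpa [div_eq_mul_inv] using ((hasDerivAt_id θ).div_const 2).sin

theorem integral_comp_sin_half {g : ℝ → ℝ} (hg : Continuous g) :
    ∫ θ in (0 : ℝ)..π, g (sin (θ / 2)) * (cos (θ / 2) / 2) = ∫ s in (0 : ℝ)..1, g s := by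
  have h := intervalIntegral.integral_comp_mul_deriv (a := 0) (b := π)
    (fun θ _ => hasDerivAt_sin_half θ) (Continuous.continuousOn (by fun_prop)) hg
  simpa using h

theorem exp_mul_cos_mul_sin_sq (x θ : ℝ) : exp (x * cos θ) * sin θ ^ 2 =
    exp x * (4 * sin (θ / 2) ^ 2 * exp (-(2 * x) * sin (θ / 2) ^ 2)) * cos (θ / 2) ^ 2 := by
  have h1 : cos θ = 1 - 2 * sin (θ / 2) ^ 2 := by
    have h := cos_two_mul (θ / 2)
    rw [mul_div_cancel₀ θ two_ne_zero, cos_sq'] at h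
    linarith
  have h2 : sin θ = 2 * sin (θ / 2) * cos (θ / 2) := by
    have h := sin_two_mul (θ / 2)
    rwa [mul_div_cancel₀ θ two_ne_zero] at h
  have h3 : exp (x * cos θ) = exp x * exp (-(2 * x) * sin (θ / 2) ^ 2) := by
    rw [h1, ← exp_add]
    ring_nf
  rw [h3, h2]
  ring

theorem cos_half_nonneg {θ : ℝ} (hθ : θ ∈ Icc 0 π) : 0 ≤ cos (θ / 2) :=
  cos_nonneg_of_mem_Icc ⟨by linarith [hθ.1, pi_pos], by linarith [hθ.2]⟩

theorem sqrt_pi_div_two_mul_div_pi {x : ℝ} (hx : 0 < x) : √(π / (2 * x)) / π = 1 / √(2 * π * x) := by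
  have hpi := pi_pos
  rw [div_eq_div_iff hpi.ne' (by positivity), ← sqrt_mul (by positivity),
    show π / (2 * x) * (2 * π * x) = π * π by field_simp, sqrt_mul_self hpi.le, one_mul]

theorem besselI1_le {x : ℝ} (hx : 0 < x) : besselI1 x ≤ exp x / √(2 * π * x) := by
  have hpi := pi_pos
  have hint := integrableOn_pow_mul_exp_neg_mul_sq_Ioi (by positivity : 0 < 2 * x) 2
  have h : ∫ θ in (0 : ℝ)..π, exp (x * cos θ) * sin θ ^ 2 ≤
      8 * exp x * (√(π / (2 * x)) / (4 * (2 * x))) := by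
    calc ∫ θ in (0 : ℝ)..π, exp (x * cos θ) * sin θ ^ 2
        ≤ ∫ θ in (0 : ℝ)..π, (8 * exp x * (sin (θ / 2) ^ 2 * exp (-(2 * x) * sin (θ / 2) ^ 2)))
            * (cos (θ / 2) / 2) := by
          refine intervalIntegral.integral_mono_on hpi.le
            (Continuous.intervalIntegrable (by fun_prop) _ _)
            (Continuous.intervalIntegrable (by fun_prop) _ _) fun θ hθ => ?_
          rw [exp_mul_cos_mul_sin_sq]
          have h1 : cos (θ / 2) ^ 2 ≤ cos (θ / 2) := by
            nlinarith [cos_half_nonneg hθ, cos_le_one (θ / 2)]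
          have := mul_le_mul_of_nonneg_left h1 (by positivity :
            0 ≤ exp x * (4 * sin (θ / 2) ^ 2 * exp (-(2 * x) * sin (θ / 2) ^ 2)))
          linarith
      _ = 8 * exp x * ∫ s in (0 : ℝ)..1, s ^ 2 * exp (-(2 * x) * s ^ 2) := by
          rw [integral_comp_sin_half
            (g := fun s => 8 * exp x * (s ^ 2 * exp (-(2 * x) * s ^ 2))) (by fun_prop),
            intervalIntegral.integral_const_mul]
      _ ≤ 8 * exp x * ∫ s in Ioi (0 : ℝ), s ^ 2 * exp (-(2 * x) * s ^ 2) := by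
          gcongr
          rw [intervalIntegral.integral_of_le zero_le_one]
          exact setIntegral_mono_set hint (ae_of_all _ fun s => by positivity)
            (Ioc_subset_Ioi_self).eventuallyLE
      _ = _ := by rw [integral_sq_mul_exp_neg_mul_sq_Ioi (by positivity)]
  rw [besselI1_eq_integral]
  calc _ ≤ x / π * (8 * exp x * (√(π / (2 * x)) / (4 * (2 * x)))) := by gcongr
    _ = exp x * (√(π / (2 * x)) / π) := by
        field_simp
        norm_num
    _ = _ := by rw [sqrt_pi_div_two_mul_div_pi hx, mul_one_div]

theorem le_besselI1 {x : ℝ} (hx : 0 < x) :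
    exp x / √(2 * π * x) * (1 - 3 / (4 * x)) ≤ besselI1 x := by
  have hpi := pi_pos
  have hint2 := integrableOn_pow_mul_exp_neg_mul_sq_Ioi (by positivity : 0 < 2 * x) 2
  have hint4 := integrableOn_pow_mul_exp_neg_mul_sq_Ioi (by positivity : 0 < 2 * x) 4
  set g : ℝ → ℝ := fun s => s ^ 2 * exp (-(2 * x) * s ^ 2) - s ^ 4 * exp (-(2 * x) * s ^ 2)
    with hg
  have hgint : IntegrableOn g (Ioi 0) := hint2.sub hint4
  have hgval : ∫ s in Ioi (0 : ℝ), g s =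
      √(π / (2 * x)) / (4 * (2 * x)) - 3 * √(π / (2 * x)) / (8 * (2 * x) ^ 2) := by
    rw [hg, integral_sub hint2 hint4, integral_sq_mul_exp_neg_mul_sq_Ioi (by positivity),
      integral_pow_four_mul_exp_neg_mul_sq_Ioi (by positivity)]
  have hgle : ∫ s in Ioi (0 : ℝ), g s ≤ ∫ s in (0 : ℝ)..1, g s := by
    rw [intervalIntegral.integral_of_le zero_le_one, ← Ioc_union_Ioi_eq_Ioi zero_le_one,
      setIntegral_union (Ioc_disjoint_Ioi le_rfl) measurableSet_Ioi
        (hgint.mono_set Ioc_subset_Ioi_self) (hgint.mono_set (Ioi_subset_Ioi zero_le_one))]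
    have : ∫ s in Ioi (1 : ℝ), g s ≤ 0 := by
      refine setIntegral_nonpos measurableSet_Ioi fun s hs => ?_
      have h1 : 1 ≤ s ^ 2 := one_le_pow₀ (le_of_lt hs)
      have h2 : g s = -(s ^ 2 * exp (-(2 * x) * s ^ 2) * (s ^ 2 - 1)) := by
        rw [hg]
        ring
      rw [h2, neg_nonpos]
      exact mul_nonneg (by positivity) (by linarith)
    linarith
  have h : 8 * exp x * ∫ s in Ioi (0 : ℝ), g s ≤
      ∫ θ in (0 : ℝ)..π, exp (x * cos θ) * sin θ ^ 2 := by
    calc 8 * exp x * ∫ s in Ioi (0 : ℝ), g s ≤ 8 * exp x * ∫ s in (0 : ℝ)..1, g s := by gcongr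
      _ = ∫ θ in (0 : ℝ)..π, (8 * exp x * g (sin (θ / 2))) * (cos (θ / 2) / 2) := by
          rw [integral_comp_sin_half (g := fun s => 8 * exp x * g s) (by fun_prop),
            intervalIntegral.integral_const_mul]
      _ ≤ _ := by
          refine intervalIntegral.integral_mono_on hpi.le
            (Continuous.intervalIntegrable (by fun_prop) _ _)
            (Continuous.intervalIntegrable (by fun_prop) _ _) fun θ hθ => ?_
          rw [exp_mul_cos_mul_sin_sq]
          have h1 : cos (θ / 2) ^ 3 ≤ cos (θ / 2) ^ 2 :=
            pow_le_pow_of_le_one (cos_half_nonneg hθ) (cos_le_one _) (by norm_num)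
          have h2 := mul_le_mul_of_nonneg_left h1 (by positivity :
            0 ≤ exp x * (4 * sin (θ / 2) ^ 2 * exp (-(2 * x) * sin (θ / 2) ^ 2)))
          have h3 : g (sin (θ / 2)) = sin (θ / 2) ^ 2 * exp (-(2 * x) * sin (θ / 2) ^ 2) *
              cos (θ / 2) ^ 2 := by
            rw [hg, cos_sq']
            ring
          rw [h3]
          linarith
  rw [besselI1_eq_integral]
  calc _ = exp x * (√(π / (2 * x)) / π) * (1 - 3 / (4 * x)) := by
        rw [sqrt_pi_div_two_mul_div_pi hx, mul_one_div]
    _ = x / π * (8 * exp x * ∫ s in Ioi (0 : ℝ), g s) := by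
        rw [hgval]
        field_simp
        ring
    _ ≤ _ := by gcongr

theorem besselK1_mul_besselI1_leading {a ξ : ℝ} (ha : 0 < a) (hξ : 0 < ξ) :
    ξ * (√(π / (2 * (a * ξ))) * exp (-(a * ξ))) * (exp ξ / √(2 * π * ξ)) =
      exp (-(a - 1) * ξ) / (2 * √a) := by
  have hpi := pi_pos
  have h : √(π / (2 * (a * ξ))) = √(2 * π * ξ) / (2 * √a * ξ) := by
    rw [show π / (2 * (a * ξ)) = (√(2 * π * ξ) / (2 * √a * ξ)) ^ 2 by
      rw [div_pow, mul_pow, mul_pow, sq_sqrt ha.le, sq_sqrt (by positivity)]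
      field_simp, sqrt_sq (by positivity)]
  have he : exp (-(a - 1) * ξ) = exp (-(a * ξ)) * exp ξ := by
    rw [← exp_add]
    ring_nf
  rw [h, he]
  field_simp

theorem besselK1_pos {x : ℝ} (hx : 0 < x) : 0 < besselK1 x :=
  lt_of_lt_of_le (by positivity) (le_besselK1 hx)

theorem besselI1_pos {x : ℝ} (hx : 0 < x) : 0 < besselI1 x :=
  lt_of_lt_of_le (half_pos hx) (half_le_besselI1 hx.le)

theorem abs_besselK1_mul_besselI1_sub_le {a ξ : ℝ} (ha : 1 ≤ a) (hξ : 1 ≤ ξ) :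
    |ξ * besselK1 (a * ξ) * besselI1 ξ - exp (-(a - 1) * ξ) / (2 * √a)| ≤
      exp (-(a - 1) * ξ) / (2 * √a) / ξ := by
  have ha0 : 0 < a := by linarith
  have hξ0 : 0 < ξ := by linarith
  have hξa : ξ ≤ a * ξ := le_mul_of_one_le_left hξ0.le ha
  have hlead := besselK1_mul_besselI1_leading ha0 hξ0
  set M := exp (-(a - 1) * ξ) / (2 * √a) with hM
  have hM0 : 0 < M := by positivity
  set k := √(π / (2 * (a * ξ))) * exp (-(a * ξ)) with hk
  set i := exp ξ / √(2 * π * ξ) with hi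
  have hk0 : 0 < k := by positivity
  have hi0 : 0 < i := by positivity
  have hKu : besselK1 (a * ξ) ≤ k * (1 + 1 / (2 * (a * ξ))) := besselK1_le (by positivity)
  have hKl : k ≤ besselK1 (a * ξ) := le_besselK1 (by positivity)
  have hIu : besselI1 ξ ≤ i := besselI1_le hξ0
  have hIl : i * (1 - 3 / (4 * ξ)) ≤ besselI1 ξ := le_besselI1 hξ0
  have hI0 := besselI1_pos hξ0
  have hupper : ξ * besselK1 (a * ξ) * besselI1 ξ ≤ M * (1 + 1 / ξ) := by
    calc ξ * besselK1 (a * ξ) * besselI1 ξ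
        ≤ ξ * (k * (1 + 1 / (2 * (a * ξ)))) * i := by gcongr
      _ = M * (1 + 1 / (2 * (a * ξ))) := by rw [← hlead]; ring
      _ ≤ M * (1 + 1 / ξ) := by gcongr; linarith
  have hlower : M * (1 - 1 / ξ) ≤ ξ * besselK1 (a * ξ) * besselI1 ξ := by
    calc M * (1 - 1 / ξ) ≤ M * (1 - 3 / (4 * ξ)) := by
          refine mul_le_mul_of_nonneg_left (sub_le_sub_left ?_ 1) hM0.le
          rw [div_le_div_iff₀ (by positivity) hξ0]
          linarith
      _ = ξ * k * (i * (1 - 3 / (4 * ξ))) := by rw [← hlead]; ring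
      _ ≤ ξ * k * besselI1 ξ := by gcongr
      _ ≤ _ := by gcongr
  rw [abs_le]
  constructor
  · have : M * (1 - 1 / ξ) = M - M / ξ := by ring
    linarith
  · have : M * (1 + 1 / ξ) = M + M / ξ := by ring
    linarith

theorem abs_log_besselI1_sub_le {ξ : ℝ} (hξ : 1 ≤ ξ) :
    |log (besselI1 ξ) - (ξ - 1 / 2 * log ξ)| ≤ 3 := by
  have hpi := pi_pos
  have hpi3 := pi_gt_three
  have hpi4 := pi_le_four
  have hξ0 : 0 < ξ := by linarith
  have hI0 := besselI1_pos hξ0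
  have hlog : log (exp ξ / √(2 * π * ξ)) = ξ - 1 / 2 * log ξ - 1 / 2 * log (2 * π) := by
    rw [log_div (exp_pos _).ne' (by positivity), log_exp, log_sqrt (by positivity),
      log_mul (by positivity) hξ0.ne']
    ring
  have h2pi : 0 ≤ log (2 * π) := log_nonneg (by linarith)
  have hlog2 := log_two_lt_d9
  have h2pi' : log (2 * π) ≤ 3 * log 2 := by
    rw [show 3 * log 2 = log (2 ^ 3) by rw [log_pow]; norm_num]
    exact log_le_log (by positivity) (by linarith)
  have hu : log (besselI1 ξ) ≤ ξ - 1 / 2 * log ξ - 1 / 2 * log (2 * π) := by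
    rw [← hlog]
    exact log_le_log hI0 (besselI1_le hξ0)
  have hl : ξ - 1 / 2 * log ξ - 1 / 2 * log (2 * π) - 2 * log 2 ≤ log (besselI1 ξ) := by
    rw [← hlog, show 2 * log 2 = log (2 ^ 2) by rw [log_pow]; norm_num,
      ← log_div (by positivity) (by norm_num)]
    refine log_le_log (by positivity) (le_trans ?_ (le_besselI1 hξ0))
    rw [div_eq_mul_inv _ ((2 : ℝ) ^ 2)]
    gcongr
    have : 3 / (4 * ξ) ≤ 3 / 4 := by
      rw [div_le_div_iff₀ (by positivity) (by norm_num)]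
      linarith
    norm_num
    linarith
  rw [abs_le]
  constructor <;> linarith

/-- The difference between the integrand of `Fint` and its leading behaviour. -/
noncomputable def FintRemainder (δ ξ : ℝ) : ℝ :=
  ξ * besselK1 ((1 + δ) * ξ) * besselI1 ξ * log (besselI1 ξ) -
    exp (-δ * ξ) / (2 * √(1 + δ)) * (ξ - 1 / 2 * log ξ)

theorem abs_FintRemainder_le_of_one_le {δ ξ : ℝ} (hδ : 0 ≤ δ) (hξ : 1 ≤ ξ) :
    |FintRemainder δ ξ| ≤ 7 * exp (-δ * ξ) := by
  have hξ0 : 0 < ξ := by linarith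
  have hP := abs_besselK1_mul_besselI1_sub_le (a := 1 + δ) (by linarith) hξ
  have hL := abs_log_besselI1_sub_le hξ
  rw [add_sub_cancel_left] at hP
  rw [FintRemainder]
  have hK0 : 0 < besselK1 ((1 + δ) * ξ) := besselK1_pos (by positivity)
  have hI0 := besselI1_pos hξ0
  have hM : exp (-δ * ξ) / (2 * √(1 + δ)) ≤ exp (-δ * ξ) := by
    refine div_le_self (exp_pos _).le ?_
    have : 1 ≤ √(1 + δ) := one_le_sqrt.2 (by linarith)
    linarith
  have hM0 : 0 < exp (-δ * ξ) / (2 * √(1 + δ)) := by positivity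
  have hP0 : 0 < ξ * besselK1 ((1 + δ) * ξ) * besselI1 ξ := by positivity
  set M := exp (-δ * ξ) / (2 * √(1 + δ))
  set P := ξ * besselK1 ((1 + δ) * ξ) * besselI1 ξ
  set L := log (besselI1 ξ)
  have hl0 : 0 ≤ log ξ := log_nonneg hξ
  have hl1 : log ξ ≤ ξ := by linarith [log_le_sub_one_of_pos hξ0]
  set l := ξ - 1 / 2 * log ξ with hl
  have hMξ : M / ξ ≤ M := div_le_self hM0.le hξ
  have hP2 : P ≤ 2 * M := by linarith [(abs_le.1 hP).2]
  have e : P * L - M * l = P * (L - l) + (P - M) * l := by ring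
  have h1 : |P * (L - l)| ≤ 2 * M * 3 := by
    rw [abs_mul, abs_of_pos hP0]
    gcongr
  have h2 : |(P - M) * l| ≤ M / ξ * ξ := by
    rw [abs_mul, abs_of_nonneg (by linarith : 0 ≤ l)]
    exact mul_le_mul hP (by linarith) (by linarith) (by positivity)
  rw [div_mul_cancel₀ _ hξ0.ne'] at h2
  rw [e]
  linarith [abs_add_le (P * (L - l)) ((P - M) * l)]

theorem abs_log_le_two_mul_rpow {ξ : ℝ} (hξ0 : 0 < ξ) (hξ : ξ ≤ 1) :
    |log ξ| ≤ 2 * ξ ^ (-(1 / 2) : ℝ) := by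
  rw [abs_of_nonpos (log_nonpos hξ0.le hξ)]
  have h := log_le_sub_one_of_pos (rpow_pos_of_pos hξ0 (-(1 / 2)))
  rw [log_rpow hξ0] at h
  linarith

theorem abs_FintRemainder_le_of_le_one {δ ξ : ℝ} (hδ : 0 ≤ δ) (hξ0 : 0 < ξ) (hξ : ξ ≤ 1) :
    |FintRemainder δ ξ| ≤ 7 * (exp (-δ * ξ) + ξ ^ (-(1 / 2) : ℝ) * exp (-δ * ξ)) := by
  have hpi := pi_pos
  have hpi4 := pi_le_four
  have hK0 : 0 < besselK1 ((1 + δ) * ξ) := besselK1_pos (by positivity)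
  have hI0 := besselI1_pos hξ0
  have hlog := abs_log_le_two_mul_rpow hξ0 hξ
  have hq : 0 < ξ ^ (-(1 / 2) : ℝ) := by positivity
  set q := ξ ^ (-(1 / 2) : ℝ)
  have hE0 := exp_pos (-δ * ξ)
  have hL : |log (besselI1 ξ)| ≤ 1 + 2 * q := by
    have hlog2 := log_two_lt_d9
    have h1 : log ξ - log 2 ≤ log (besselI1 ξ) := by
      rw [← log_div hξ0.ne' two_ne_zero]
      exact log_le_log (by positivity) (half_le_besselI1 hξ0.le)
    have h2 : log (besselI1 ξ) ≤ log ξ + ξ := by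
      have := log_le_log hI0 (besselI1_le_mul_exp hξ0.le)
      rwa [log_mul hξ0.ne' (exp_pos _).ne', log_exp] at this
    obtain ⟨h3, h4⟩ := abs_le.1 hlog
    rw [abs_le]
    constructor <;> linarith
  have hs : √(π / (2 * ((1 + δ) * ξ))) * ξ ≤ 2 := by
    have h1 : √(π / (2 * ((1 + δ) * ξ))) * ξ = √(π / (2 * ((1 + δ) * ξ)) * ξ ^ 2) := by
      rw [sqrt_mul' _ (sq_nonneg ξ), sqrt_sq hξ0.le]
    rw [h1]
    refine sqrt_le_iff.2 ⟨by norm_num, ?_⟩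
    rw [div_mul_eq_mul_div, div_le_iff₀ (by positivity)]
    have h2 : π * ξ ^ 2 ≤ 4 * ξ := by nlinarith
    nlinarith [mul_nonneg hδ hξ0.le]
  have hP : ξ * besselK1 ((1 + δ) * ξ) * besselI1 ξ ≤ 3 * exp (-δ * ξ) := by
    calc ξ * besselK1 ((1 + δ) * ξ) * besselI1 ξ
        ≤ ξ * (√(π / (2 * ((1 + δ) * ξ))) * exp (-((1 + δ) * ξ)) *
            (1 + 1 / (2 * ((1 + δ) * ξ)))) * (ξ * exp ξ) := by
          gcongr
          · exact besselK1_le (by positivity)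
          · exact besselI1_le_mul_exp hξ0.le
      _ = (√(π / (2 * ((1 + δ) * ξ))) * ξ) * (ξ + 1 / (2 * (1 + δ))) *
            (exp (-((1 + δ) * ξ)) * exp ξ) := by
          field_simp
      _ = (√(π / (2 * ((1 + δ) * ξ))) * ξ) * (ξ + 1 / (2 * (1 + δ))) * exp (-δ * ξ) := by
          rw [← exp_add]
          ring_nf
      _ ≤ 2 * (1 + 1 / 2) * exp (-δ * ξ) := by
          gcongr
          linarith
      _ = 3 * exp (-δ * ξ) := by norm_num
  have hM : exp (-δ * ξ) / (2 * √(1 + δ)) ≤ 1 / 2 * exp (-δ * ξ) := by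
    have : 1 ≤ √(1 + δ) := one_le_sqrt.2 (by linarith)
    rw [div_le_iff₀ (by positivity)]
    nlinarith
  have hl : |ξ - 1 / 2 * log ξ| ≤ 1 + q := by
    obtain ⟨h3, h4⟩ := abs_le.1 hlog
    rw [abs_le]
    constructor <;> linarith
  rw [FintRemainder]
  refine (abs_sub _ _).trans ?_
  rw [abs_mul _ (log _), abs_mul _ (ξ - _), abs_of_pos (by positivity : 0 < exp (-δ * ξ) / (2 * √(1 + δ))),
    abs_of_pos (by positivity : 0 < ξ * besselK1 ((1 + δ) * ξ) * besselI1 ξ)]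
  calc _ ≤ 3 * exp (-δ * ξ) * (1 + 2 * q) + 1 / 2 * exp (-δ * ξ) * (1 + q) := by gcongr
    _ ≤ _ := by nlinarith [mul_pos hq hE0]

theorem abs_FintRemainder_le {δ ξ : ℝ} (hδ : 0 ≤ δ) (hξ : 0 < ξ) :
    |FintRemainder δ ξ| ≤ 7 * (exp (-δ * ξ) + ξ ^ (-(1 / 2) : ℝ) * exp (-δ * ξ)) := by
  rcases le_total ξ 1 with h | h
  · exact abs_FintRemainder_le_of_le_one hδ hξ h
  · refine (abs_FintRemainder_le_of_one_le hδ h).trans ?_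
    gcongr
    exact le_add_of_nonneg_right (by positivity)

theorem integrableOn_rpow_mul_exp_neg_mul {q δ : ℝ} (hq : -1 < q) (hδ : 0 < δ) :
    IntegrableOn (fun ξ : ℝ => ξ ^ q * exp (-δ * ξ)) (Ioi 0) := by
  simpa only [rpow_one] using integrableOn_rpow_mul_exp_neg_mul_rpow hq one_pos hδ

theorem integral_rpow_mul_exp_neg_mul {q δ : ℝ} (hq : -1 < q) (hδ : 0 < δ) :
    ∫ ξ in Ioi (0 : ℝ), ξ ^ q * exp (-δ * ξ) = δ ^ (-(q + 1)) * Gamma (q + 1) := by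
  simpa only [rpow_one, div_one, mul_one] using integral_rpow_mul_exp_neg_mul_rpow one_pos hq hδ

theorem integrableOn_log_mul_exp_neg_mul {δ : ℝ} (hδ : 0 < δ) :
    IntegrableOn (fun ξ : ℝ => log ξ * exp (-δ * ξ)) (Ioi 0) := by
  have h1 := integrableOn_rpow_mul_exp_neg_mul (q := 1) (by norm_num) hδ
  have h2 := integrableOn_rpow_mul_exp_neg_mul (q := -(1 / 2)) (by norm_num) hδ
  refine Integrable.mono' (h1.add (h2.const_mul 2)) ?_ ?_
  · exact (by fun_prop : Measurable fun ξ : ℝ => log ξ * exp (-δ * ξ)).aestronglyMeasurable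
  · refine (ae_restrict_iff' measurableSet_Ioi).2 (ae_of_all _ fun ξ hξ => ?_)
    have hξ : 0 < ξ := hξ
    have h : |log ξ| ≤ ξ + 2 * ξ ^ (-(1 / 2) : ℝ) := by
      rcases le_total ξ 1 with h | h
      · linarith [abs_log_le_two_mul_rpow hξ h]
      · rw [abs_of_nonneg (log_nonneg h)]
        have : 0 < ξ ^ (-(1 / 2) : ℝ) := by positivity
        linarith [log_le_sub_one_of_pos hξ]
    rw [norm_mul, norm_of_nonneg (exp_pos _).le, norm_eq_abs]
    simp only [Pi.add_apply, rpow_one]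
    calc |log ξ| * exp (-δ * ξ) ≤ (ξ + 2 * ξ ^ (-(1 / 2) : ℝ)) * exp (-δ * ξ) := by gcongr
      _ = _ := by ring

theorem integral_log_mul_exp_neg_mul {δ : ℝ} (hδ : 0 < δ) :
    ∫ ξ in Ioi (0 : ℝ), log ξ * exp (-δ * ξ) =
      ((∫ u in Ioi (0 : ℝ), log u * exp (-u)) - log δ) / δ := by
  have h0 := integrableOn_rpow_mul_exp_neg_mul (q := 0) (by norm_num) hδ
  have h1 := integral_rpow_mul_exp_neg_mul (q := 0) (by norm_num) hδ
  simp only [rpow_zero, one_mul, zero_add, Gamma_one, mul_one, rpow_neg_one] at h0 h1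
  have h := integral_comp_mul_left_Ioi (fun u => log u * exp (-u)) 0 hδ
  have h2 : ∫ ξ in Ioi (0 : ℝ), log (δ * ξ) * exp (-(δ * ξ)) =
      ∫ ξ in Ioi (0 : ℝ), (log δ * exp (-δ * ξ) + log ξ * exp (-δ * ξ)) := by
    refine setIntegral_congr_fun measurableSet_Ioi fun ξ hξ => ?_
    rw [log_mul hδ.ne' (ne_of_gt hξ), neg_mul]
    ring
  rw [h2, integral_add (h0.const_mul _) (integrableOn_log_mul_exp_neg_mul hδ),
    integral_const_mul, h1, mul_zero, smul_eq_mul] at h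
  rw [eq_sub_of_add_eq' h]
  field_simp

theorem measurable_FintRemainder (δ : ℝ) : Measurable (FintRemainder δ) := by
  have h1 := measurable_besselI1
  have h2 : Measurable fun ξ : ℝ => besselK1 ((1 + δ) * ξ) :=
    measurable_besselK1.comp (measurable_const_mul _)
  unfold FintRemainder
  fun_prop

theorem integrableOn_FintRemainder_bound {δ : ℝ} (hδ : 0 < δ) :
    IntegrableOn (fun ξ : ℝ => 7 * (exp (-δ * ξ) + ξ ^ (-(1 / 2) : ℝ) * exp (-δ * ξ))) (Ioi 0) := by
  have h0 := integrableOn_rpow_mul_exp_neg_mul (q := 0) (by norm_num) hδ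
  have h1 := integrableOn_rpow_mul_exp_neg_mul (q := -(1 / 2)) (by norm_num) hδ
  simp only [rpow_zero, one_mul] at h0
  exact (h0.add h1).const_mul 7

theorem integrableOn_FintRemainder {δ : ℝ} (hδ : 0 < δ) :
    IntegrableOn (FintRemainder δ) (Ioi 0) := by
  refine Integrable.mono' (integrableOn_FintRemainder_bound hδ)
    (measurable_FintRemainder δ).aestronglyMeasurable ?_
  exact (ae_restrict_iff' measurableSet_Ioi).2 (ae_of_all _ fun ξ hξ =>
    abs_FintRemainder_le hδ.le hξ)

theorem abs_integral_FintRemainder_le {δ : ℝ} (hδ : 0 < δ) (hδ1 : δ ≤ 1) :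
    |∫ ξ in Ioi (0 : ℝ), FintRemainder δ ξ| ≤ 21 / δ := by
  have h0 := integrableOn_rpow_mul_exp_neg_mul (q := 0) (by norm_num) hδ
  have h1 := integrableOn_rpow_mul_exp_neg_mul (q := -(1 / 2)) (by norm_num) hδ
  have v0 := integral_rpow_mul_exp_neg_mul (q := 0) (by norm_num) hδ
  have v1 := integral_rpow_mul_exp_neg_mul (q := -(1 / 2)) (by norm_num) hδ
  simp only [rpow_zero, one_mul, zero_add, Gamma_one, mul_one, rpow_neg_one] at h0 v0
  rw [show -(1 / 2 : ℝ) + 1 = 1 / 2 by norm_num, Gamma_one_half_eq] at v1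
  have hpow : δ ^ (-(1 / 2) : ℝ) ≤ δ⁻¹ := by
    rw [← rpow_neg_one]
    exact rpow_le_rpow_of_exponent_ge hδ hδ1 (by norm_num)
  have hpi : √π ≤ 2 := sqrt_le_iff.2 ⟨by norm_num, by linarith [pi_le_four]⟩
  rw [← norm_eq_abs]
  calc ‖∫ ξ in Ioi (0 : ℝ), FintRemainder δ ξ‖
      ≤ ∫ ξ in Ioi (0 : ℝ), 7 * (exp (-δ * ξ) + ξ ^ (-(1 / 2) : ℝ) * exp (-δ * ξ)) :=
        norm_integral_le_of_norm_le (integrableOn_FintRemainder_bound hδ)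
          ((ae_restrict_iff' measurableSet_Ioi).2 (ae_of_all _ fun ξ hξ =>
            abs_FintRemainder_le hδ.le hξ))
    _ = 7 * (δ⁻¹ + δ ^ (-(1 / 2) : ℝ) * √π) := by
        rw [integral_const_mul, integral_add h0 h1, v0, v1]
    _ ≤ 7 * (δ⁻¹ + δ⁻¹ * 2) := by gcongr
    _ = 21 / δ := by ring

theorem Fint_eq {ρ δ : ℝ} (hδ : 0 < δ) (hρ : √(1 + ρ⁻¹) = 1 + δ) :
    Fint ρ = 1 / (2 * √(1 + δ)) * (1 / δ ^ 2 -
      1 / 2 * (((∫ u in Ioi (0 : ℝ), log u * exp (-u)) - log δ) / δ)) +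
      ∫ ξ in Ioi (0 : ℝ), FintRemainder δ ξ := by
  have h1 := integrableOn_rpow_mul_exp_neg_mul (q := 1) (by norm_num) hδ
  have v1 := integral_rpow_mul_exp_neg_mul (q := 1) (by norm_num) hδ
  simp only [rpow_one] at h1 v1
  rw [show (1 : ℝ) + 1 = (2 : ℕ) by norm_num, rpow_neg hδ.le, rpow_natCast, Nat.cast_ofNat,
    Gamma_two, mul_one] at v1
  have h2 := integrableOn_log_mul_exp_neg_mul hδ
  have hmain : IntegrableOn (fun ξ : ℝ => 1 / (2 * √(1 + δ)) *
      (ξ * exp (-δ * ξ) - 1 / 2 * (log ξ * exp (-δ * ξ)))) (Ioi 0) :=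
    (h1.sub (h2.const_mul _)).const_mul _
  have hF : Fint ρ = ∫ ξ in Ioi (0 : ℝ), (1 / (2 * √(1 + δ)) *
      (ξ * exp (-δ * ξ) - 1 / 2 * (log ξ * exp (-δ * ξ))) + FintRemainder δ ξ) := by
    rw [Fint, hρ]
    refine integral_congr_ae (ae_of_all _ fun ξ => ?_)
    simp only [FintRemainder]
    ring
  rw [hF, integral_add hmain (integrableOn_FintRemainder hδ), integral_const_mul,
    integral_sub h1 (h2.const_mul _), integral_const_mul, v1, integral_log_mul_exp_neg_mul hδ,
    one_div (δ ^ 2)]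

theorem exists_abs_scaled_Fint_sub_le : ∃ C : ℝ, ∀ ρ : ℝ, 1 ≤ ρ →
    |ρ⁻¹ * √(1 + ρ⁻¹) * Fint ρ - 2 * ρ + 1 / 2 * log ρ| ≤ C := by
  set c := ∫ u in Ioi (0 : ℝ), log u * exp (-u) with hc
  refine ⟨131 + 2 * |c|, fun ρ hρ => ?_⟩
  have hρ0 : 0 < ρ := by linarith
  obtain ⟨δ, hδ⟩ : ∃ δ, √(1 + ρ⁻¹) = 1 + δ := ⟨√(1 + ρ⁻¹) - 1, by ring⟩
  have hsq : (1 + δ) ^ 2 = 1 + ρ⁻¹ := by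
    rw [← hδ, sq_sqrt (by positivity)]
  have hδ0 : 0 < δ := by
    have : 1 < √(1 + ρ⁻¹) := by
      rw [lt_sqrt zero_le_one]
      simpa using hρ0
    linarith
  have hδ1 : δ ≤ 1 := by
    have : ρ⁻¹ ≤ 1 := inv_le_one_of_one_le₀ hρ
    nlinarith
  have hρδ : ρ⁻¹ = δ * (2 + δ) := by linarith
  have hρ' : ρ = 1 / (δ * (2 + δ)) := by rw [← hρδ, one_div, inv_inv]
  have hE := abs_integral_FintRemainder_le hδ0 hδ1
  rw [Fint_eq hδ0 hδ, ← hc, hδ]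
  set E := ∫ ξ in Ioi (0 : ℝ), FintRemainder δ ξ
  obtain ⟨A, hA, hA0⟩ : ∃ A, A = √(1 + δ) ∧ 0 < A := ⟨_, rfl, by positivity⟩
  have hAsq : A ^ 2 = 1 + δ := by rw [hA, sq_sqrt (by positivity)]
  have hA1 : 1 ≤ A := by nlinarith
  have hA2 : A ≤ 1 + δ / 2 := by nlinarith
  rw [← hA]
  have hlogρ : log ρ = -log δ - log (2 + δ) := by
    rw [hρ', one_div, log_inv, log_mul hδ0.ne' (by positivity)]
    ring
  set κ := (2 + δ) * A / 2 - 1 with hκ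
  have hκ0 : 0 ≤ κ := by nlinarith
  have hκ2 : κ ≤ 2 * δ := by nlinarith
  have hsplit : ρ⁻¹ * (1 + δ) * (1 / (2 * A) * (1 / δ ^ 2 - 1 / 2 * ((c - log δ) / δ)) + E) -
      2 * ρ + 1 / 2 * log ρ = κ / δ + 1 / 2 * (κ * log δ) - 1 / 2 * ((1 + κ) * c) +
      (2 + δ) * (1 + δ) * (δ * E) + 1 / (2 + δ) - 1 / 2 * log (2 + δ) := by
    rw [hlogρ, hρδ, hρ', hκ, ← hAsq]
    field_simp
    ring
  have b1 : |κ / δ| ≤ 2 := by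
    rw [abs_of_nonneg (by positivity), div_le_iff₀ hδ0]
    exact hκ2
  have hlogδ : |δ * log δ| ≤ 1 := by
    have h1 := log_le_sub_one_of_pos (inv_pos.2 hδ0)
    rw [log_inv] at h1
    rw [abs_of_nonpos (mul_nonpos_of_nonneg_of_nonpos hδ0.le (log_nonpos hδ0.le hδ1)), ← mul_neg]
    calc δ * -log δ ≤ δ * δ⁻¹ := by
          gcongr
          linarith
      _ = 1 := mul_inv_cancel₀ hδ0.ne'
  have b2 : |κ * log δ| ≤ 2 := by
    rw [abs_mul] at hlogδ ⊢
    rw [abs_of_pos hδ0] at hlogδ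
    rw [abs_of_nonneg hκ0]
    nlinarith [abs_nonneg (log δ)]
  have b3 : |(1 + κ) * c| ≤ 3 * |c| := by
    rw [abs_mul, abs_of_nonneg (by linarith)]
    gcongr
    linarith
  have b4 : |(2 + δ) * (1 + δ) * (δ * E)| ≤ 126 := by
    have h1 : |δ * E| ≤ 21 := by
      rw [abs_mul, abs_of_pos hδ0]
      rw [le_div_iff₀ hδ0] at hE
      linarith
    have h2 : (2 + δ) * (1 + δ) ≤ 6 := by nlinarith
    rw [abs_mul, abs_of_pos (by positivity)]
    calc (2 + δ) * (1 + δ) * |δ * E| ≤ 6 * 21 := by gcongr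
      _ = 126 := by norm_num
  have b5 : |1 / (2 + δ)| ≤ 1 := by
    rw [abs_of_pos (by positivity), div_le_one (by positivity)]
    linarith
  have b6 : |log (2 + δ)| ≤ 2 := by
    rw [abs_of_nonneg (log_nonneg (by linarith))]
    linarith [log_le_sub_one_of_pos (by positivity : 0 < 2 + δ)]
  have hc0 := abs_nonneg c
  rw [hsplit]
  rw [abs_le] at b1 b2 b3 b4 b5 b6 ⊢
  constructor <;>
    linarith [b1.1, b1.2, b2.1, b2.2, b3.1, b3.2, b4.1, b4.2, b5.1, b5.2, b6.1, b6.2]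

/-- ρ⁻¹ √(1+ρ⁻¹) F(ρ) = 2ρ − (1/2) log ρ + o(log ρ) as ρ → ∞. -/
theorem stmt_8 :
    Tendsto
      (fun ρ : ℝ =>
        (ρ⁻¹ * Real.sqrt (1 + ρ⁻¹) * Fint ρ - 2 * ρ + (1 / 2) * Real.log ρ) / Real.log ρ)
      atTop (nhds 0) := by
  obtain ⟨C, hC⟩ := exists_abs_scaled_Fint_sub_le
  refine squeeze_zero_norm' (a := fun ρ => C / log ρ) ?_ (tendsto_log_atTop.const_div_atTop C)
  filter_upwards [eventually_ge_atTop 1] with ρ hρ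
  rw [norm_div, norm_eq_abs, norm_of_nonneg (log_nonneg hρ)]
  exact div_le_div_of_nonneg_right (hC ρ hρ) (log_nonneg hρ)
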